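/- Let d ≥ 3 and p ∈ (p_c^site(ℤ^d), 1 − p_c^site(ℤ^d)). Then for every fixed word ξ ∈ Ξ, ℙ_p(ξ ∈ S_∞) = 1, i.e. almost surely ξ is seen from some vertex of ℤ^d. -/

import Mathlib

open MeasureTheory Set

namespace PercWords

/-- Vertices of the hypercubic lattice `ℤ^d`. -/
abbrev Vtx (d : ℕ) := Fin d → ℤ

/-- Site percolation configurations on `ℤ^d` (`true` = state 1, `false` = state 0). -/
abbrev Config (d : ℕ) := Vtx d → Bool

/-- `u ∼ v` : the Euclidean distance between `u` and `v` is `1`. -/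
def adj {d : ℕ} (u v : Vtx d) : Prop := (∑ i, (u i - v i) ^ 2) = 1

/-- `μ` is Bernoulli site percolation with parameter `p` on the index set `ι`:
a probability measure under which, independently, each site has state `true`
with probability `p` and state `false` with probability `1 - p`. -/
def IsBernoulliFam {ι : Type} (p : ℝ) (μ : Measure (ι → Bool)) : Prop :=
  IsProbabilityMeasure μ ∧
    ∀ (s : Finset ι) (f : ι → Bool),
      μ {ω | ∀ v ∈ s, ω v = f v} =
        ∏ v ∈ s, ENNReal.ofReal (if f v then p else 1 - p)

/-- The word `ξ` is seen from `v` along an infinite self-avoiding path all of whose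
vertices lie in `A`. -/
def seesWordIn {d : ℕ} (ω : Config d) (ξ : ℕ → Bool) (A : Set (Vtx d)) (v : Vtx d) : Prop :=
  ∃ γ : ℕ → Vtx d, γ 0 = v ∧ Function.Injective γ ∧
    (∀ i, adj (γ i) (γ (i + 1))) ∧ (∀ i, γ i ∈ A) ∧ (∀ i, ω (γ i) = ξ i)

/-- The word `ξ` is seen from `v` in the configuration `ω`. -/
def seesWord {d : ℕ} (ω : Config d) (ξ : ℕ → Bool) (v : Vtx d) : Prop :=
  seesWordIn ω ξ Set.univ v

/-- `v` lies in an infinite connected set of `1`-vertices of `ω`. -/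
def PercolatesAt {d : ℕ} (ω : Config d) (v : Vtx d) : Prop :=
  ∃ C : Set (Vtx d), v ∈ C ∧ C.Infinite ∧ (∀ u ∈ C, ω u = true) ∧
    ∀ u₁ ∈ C, ∀ u₂ ∈ C, ∃ n : ℕ, ∃ γ : ℕ → Vtx d,
      γ 0 = u₁ ∧ γ n = u₂ ∧ (∀ i < n, adj (γ i) (γ (i + 1))) ∧ (∀ i ≤ n, γ i ∈ C)

/-- The critical point of Bernoulli site percolation on `ℤ^d`, relative to a family
`ℙ p` of Bernoulli site percolation measures: the infimum of the set of parameters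
for which the origin lies in an infinite connected set of `1`-vertices with positive
probability. -/
noncomputable def pcSite (d : ℕ) (ℙ : ℝ → Measure (Config d)) : ℝ :=
  sInf {p : ℝ | p ∈ Set.Icc (0 : ℝ) 1 ∧ 0 < ℙ p {ω | PercolatesAt ω (fun _ => 0)}}

/-!
Choose `q < min p (1 - p)` at which open sites percolate. Reveal the sites of a finite box one at a
time, always at a vertex that the current candidate paths can reach: an open walk continues there
with probability `q`, while the word, whichever letter comes next, continues with probability `p` or
`1 - p`, hence at least `q`. So the word leaves every box at least as likely as an open walk does.
Restricting the exploration to unvisited sites costs open walks nothing, since they can be made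
self-avoiding, and makes the word path self-avoiding. By compactness the word is seen from the
origin with positive probability, and ergodicity under translations turns this into probability one.
-/

section WordPaths

variable {V : Type*} {R : V → V → Prop} {T U U' : Set V} {ω ω' : V → Bool} {ξ : ℕ → Bool}
  {u v : V} {i n : ℕ}

/-- An open walk from a vertex to `T`: an `R`-walk whose vertices before the first visit to `T` lie
in `U` and have state `1`. The vertex where the walk enters `T` is unconstrained. -/
inductive HasOpenWalkTo (R : V → V → Prop) (T : Set V) (ω : V → Bool) (U : Set V) : V → Prop
  | done {v : V} : v ∈ T → HasOpenWalkTo R T ω U v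
  | step {v w : V} : v ∈ U → ω v = true → R v w → HasOpenWalkTo R T ω U w →
      HasOpenWalkTo R T ω U v

/-- The word `ξ i, ξ (i + 1), …` is read along an `R`-path from a vertex to `T`, whose vertices
before the end are distinct and lie in `U`. Self-avoidance is encoded by deleting each visited
vertex from `U`; as in `HasOpenWalkTo`, the state of the end in `T` is unconstrained. -/
inductive HasWordPathTo (R : V → V → Prop) (T : Set V) (ω : V → Bool) (ξ : ℕ → Bool) :
    Set V → V → ℕ → Prop
  | done {U : Set V} {v : V} {i : ℕ} : v ∈ T → HasWordPathTo R T ω ξ U v i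
  | step {U : Set V} {v w : V} {i : ℕ} : v ∈ U → ω v = ξ i → R v w →
      HasWordPathTo R T ω ξ (U \ {v}) w (i + 1) → HasWordPathTo R T ω ξ U v i

/-- The word `ξ i, …, ξ (i + n)` is read along a self-avoiding `R`-path of `n` steps inside `U`
started at a given vertex. -/
def HasWordPathOfLength (R : V → V → Prop) (ω : V → Bool) (ξ : ℕ → Bool) :
    ℕ → Set V → V → ℕ → Prop
  | 0, U, v, i => v ∈ U ∧ ω v = ξ i
  | n + 1, U, v, i =>
      (v ∈ U ∧ ω v = ξ i) ∧ ∃ w, R v w ∧ HasWordPathOfLength R ω ξ n (U \ {v}) w (i + 1)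

lemma HasOpenWalkTo.congr (h : HasOpenWalkTo R T ω U v) (hω : ∀ u ∈ U, ω u = ω' u) :
    HasOpenWalkTo R T ω' U v := by
  induction h with
  | done hT => exact .done hT
  | step hU hv hR _ ih => exact .step hU (hω _ hU ▸ hv) hR ih

lemma HasWordPathTo.congr (h : HasWordPathTo R T ω ξ U v i) (hω : ∀ u ∈ U, ω u = ω' u) :
    HasWordPathTo R T ω' ξ U v i := by
  induction h with
  | done hT => exact .done hT
  | step hU hv hR _ ih => exact .step hU (hω _ hU ▸ hv) hR (ih fun u hu ↦ hω u hu.1)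

lemma HasWordPathTo.mono (h : HasWordPathTo R T ω ξ U v i) (hU : U ⊆ U') :
    HasWordPathTo R T ω ξ U' v i := by
  induction h generalizing U' with
  | done hT => exact .done hT
  | step hv hω hR _ ih => exact .step (hU hv) hω hR (ih (sdiff_subset_sdiff_left hU))

-- If the walk visits `v`, cut it at its last visit.
lemma HasOpenWalkTo.avoid_or (h : HasOpenWalkTo R T ω U u) (v : V) :
    HasOpenWalkTo R T ω (U \ {v}) u ∨
      ω v = true ∧ ∃ w, R v w ∧ HasOpenWalkTo R T ω (U \ {v}) w := by
  induction h with
  | done hT => exact .inl (.done hT)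
  | @step u w hU hω hR _ ih =>
    rcases ih with hw | hv
    · rcases eq_or_ne u v with rfl | huv
      · exact .inr ⟨hω, w, hR, hw⟩
      · exact .inl (.step ⟨hU, huv⟩ hω hR hw)
    · exact .inr hv

lemma antitone_hasWordPathOfLength :
    Antitone fun n ↦ HasWordPathOfLength R ω ξ n U v i := by
  refine antitone_nat_of_succ_le fun n ↦ ?_
  induction n generalizing U v i with
  | zero => exact And.left
  | succ n ih => exact fun ⟨hv, w, hR, hw⟩ ↦ ⟨hv, w, hR, ih hw⟩

/-- The vertices reachable from `v` in at most `n` steps of `R`. -/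
def reachBall (R : V → V → Prop) : ℕ → V → Set V
  | 0, v => {v}
  | n + 1, v => insert v (⋃ w ∈ {w | R v w}, reachBall R n w)

lemma mem_reachBall_self (n : ℕ) (v : V) : v ∈ reachBall R n v := by
  cases n <;> simp [reachBall]

lemma finite_reachBall (hR : ∀ v, {w | R v w}.Finite) (n : ℕ) (v : V) :
    (reachBall R n v).Finite := by
  induction n generalizing v with
  | zero => exact finite_singleton v
  | succ n ih => exact ((hR v).biUnion fun w _ ↦ ih w).insert v

lemma HasWordPathTo.hasWordPathOfLength (h : HasWordPathTo R T ω ξ U v i)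
    (hT : Disjoint (reachBall R n v) T) : HasWordPathOfLength R ω ξ n U v i := by
  induction h generalizing n with
  | @done U v i hv => exact (hT.notMem_of_mem_left (mem_reachBall_self n v) hv).elim
  | @step U v w i hv hω hR _ ih =>
    cases n with
    | zero => exact ⟨hv, hω⟩
    | succ n =>
      have hsub : reachBall R n w ⊆ reachBall R (n + 1) v :=
        (subset_biUnion_of_mem (u := reachBall R n) (show w ∈ {w | R v w} from hR)).trans
          (subset_insert _ _)
      exact ⟨⟨hv, hω⟩, w, hR, ih (hT.mono_left hsub)⟩

lemma HasWordPathOfLength.mem (h : HasWordPathOfLength R ω ξ n U v i) : v ∈ U ∧ ω v = ξ i :=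
  antitone_hasWordPathOfLength n.zero_le h

lemma hasWordPathOfLength_of_path {γ : ℕ → V} (hγ : Function.Injective γ)
    (hR : ∀ k, R (γ k) (γ (k + 1))) (hω : ∀ k, ω (γ k) = ξ k) (n : ℕ)
    (hU : ∀ k ≥ i, γ k ∈ U) : HasWordPathOfLength R ω ξ n U (γ i) i := by
  induction n generalizing U i with
  | zero => exact ⟨hU i le_rfl, hω i⟩
  | succ n ih =>
    refine ⟨⟨hU i le_rfl, hω i⟩, γ (i + 1), hR i, ih fun k hk ↦ ⟨hU k (by lia), ?_⟩⟩
    exact hγ.ne (by lia : k ≠ i)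

lemma exists_forall_hasWordPathOfLength (hR : {w | R v w}.Finite)
    (h : ∀ n, HasWordPathOfLength R ω ξ n U v i) :
    ∃ w, R v w ∧ ∀ n, HasWordPathOfLength R ω ξ n (U \ {v}) w (i + 1) := by
  by_contra! hdead
  choose! N hN using hdead
  obtain ⟨M, hM⟩ := (hR.image N).bddAbove
  obtain ⟨-, w, hvw, hw⟩ := h (M + 1)
  exact hN w hvw (antitone_hasWordPathOfLength (hM (mem_image_of_mem N hvw)) hw)

theorem exists_path_iff_forall_hasWordPathOfLength (hR : ∀ v, {w | R v w}.Finite) :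
    (∃ γ : ℕ → V, γ 0 = v ∧ Function.Injective γ ∧ (∀ k, R (γ k) (γ (k + 1))) ∧
      (∀ k, γ k ∈ U) ∧ ∀ k, ω (γ k) = ξ k) ↔ ∀ n, HasWordPathOfLength R ω ξ n U v 0 := by
  refine ⟨?_, fun h ↦ ?_⟩
  · rintro ⟨γ, rfl, hγ, hstep, hU, hω⟩ n
    exact hasWordPathOfLength_of_path hγ hstep hω n fun k _ ↦ hU k
  -- The state of the construction at time `k`: the current vertex and the set still available.
  let State (k : ℕ) := {s : Set V × V // ∀ n, HasWordPathOfLength R ω ξ n s.1 s.2 k}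
  have hnext (k : ℕ) (s : State k) :
      ∃ t : State (k + 1), R s.1.2 t.1.2 ∧ t.1.1 = s.1.1 \ {s.1.2} := by
    obtain ⟨w, hw, hlong⟩ := exists_forall_hasWordPathOfLength (hR _) s.2
    exact ⟨⟨(_, w), hlong⟩, hw, rfl⟩
  choose next hstep havail using hnext
  let s : ∀ k, State k := fun k ↦ Nat.rec ⟨(U, v), h⟩ next k
  have hmem (k : ℕ) : (s k).1.2 ∈ (s k).1.1 ∧ ω (s k).1.2 = ξ k := ((s k).2 0).mem
  have hanti : Antitone fun k ↦ (s k).1.1 :=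
    antitone_nat_of_succ_le fun k ↦ (havail k (s k)).trans_subset sdiff_subset
  refine ⟨fun k ↦ (s k).1.2, rfl, Function.Injective.of_lt_imp_ne fun k l hkl heq ↦ ?_,
    fun k ↦ hstep k (s k), fun k ↦ hanti k.zero_le (hmem k).1, fun k ↦ (hmem k).2⟩
  have hl : (s l).1.2 ∈ (s k).1.1 \ {(s k).1.2} :=
    havail k (s k) ▸ hanti (Nat.succ_le_of_lt hkl) (hmem l).1
  exact hl.2 heq.symm

lemma measurableSet_hasWordPathOfLength (hR : ∀ v, {w | R v w}.Finite) (ξ : ℕ → Bool) (n : ℕ)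
    (U : Set V) (v : V) (i : ℕ) :
    MeasurableSet {ω : V → Bool | HasWordPathOfLength R ω ξ n U v i} := by
  have hv (U : Set V) (v : V) (i : ℕ) : MeasurableSet {ω : V → Bool | v ∈ U ∧ ω v = ξ i} :=
    (MeasurableSet.const (v ∈ U)).inter (measurableSet_eq_fun (measurable_pi_apply v)
      measurable_const)
  induction n generalizing U v i with
  | zero => exact hv U v i
  | succ n ih =>
    have hw := (hR v).measurableSet_biUnion fun w _ ↦ ih (U \ {v}) w (i + 1)
    convert (hv U v i).inter hw using 1
    ext ω
    simp [HasWordPathOfLength]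

end WordPaths

section FinitelyManyCoordinates

variable {ι : Type*} {α : ι → Type*} {A : Set (∀ i, α i)} {S : Finset ι}

lemma restrict_preimage_image_restrict (hA : DependsOn (· ∈ A) (S : Set ι)) :
    S.restrict ⁻¹' (S.restrict '' A) = A := by
  refine (subset_preimage_image _ _).antisymm' ?_
  rintro ω ⟨ω', hω', heq⟩
  exact (hA fun v hv ↦ congrFun heq ⟨v, hv⟩).mp hω'

lemma measurableSet_of_dependsOn [∀ i, MeasurableSpace (α i)] [∀ i, MeasurableSingletonClass (α i)]
    [∀ i, Finite (α i)] (hA : DependsOn (· ∈ A) (S : Set ι)) : MeasurableSet A := by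
  rw [← restrict_preimage_image_restrict hA]
  exact Finset.measurable_restrict S (Set.toFinite _).measurableSet

lemma dependsOn_setOf_eval_eq (i : ι) (a : α i) :
    DependsOn (· ∈ {ω : ∀ i, α i | ω i = a}) (({i} : Finset ι) : Set ι) :=
  fun ω ω' hω ↦ by simp [hω i (by simp)]

end FinitelyManyCoordinates

section Bernoulli

variable {V : Type} {p : ℝ} {μ ν : Measure (V → Bool)} {A B E : Set (V → Bool)}
  {S S' : Finset V} {v : V}

namespace IsBernoulliFam

lemma measure_setOf_eq (h : IsBernoulliFam p μ) (v : V) (b : Bool) :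
    μ {ω | ω v = b} = ENNReal.ofReal (if b then p else 1 - p) := by
  simpa using h.2 {v} fun _ ↦ b

lemma mem_Icc [Nonempty V] (h : IsBernoulliFam p μ) : p ∈ Icc 0 1 := by
  have := h.1
  obtain ⟨v⟩ := ‹Nonempty V›
  have hle : ∀ b : Bool, (if b then p else 1 - p) ≤ 1 := fun b ↦ by
    rw [← ENNReal.ofReal_le_one, ← h.measure_setOf_eq v b]
    exact prob_le_one
  have htrue := hle true
  have hfalse := hle false
  simp only [if_true, Bool.false_eq_true, if_false] at htrue hfalse
  exact ⟨by linarith, htrue⟩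

lemma measureReal_setOf_eq (h : IsBernoulliFam p μ) (v : V) (b : Bool) :
    μ.real {ω | ω v = b} = if b then p else 1 - p := by
  have : Nonempty V := ⟨v⟩
  obtain ⟨h0, h1⟩ := h.mem_Icc
  rw [measureReal_def, h.measure_setOf_eq, ENNReal.toReal_ofReal]
  split_ifs <;> linarith

lemma map_restrict_singleton (h : IsBernoulliFam p μ) (S : Finset V) (f : S → Bool) :
    μ.map S.restrict {f} = ∏ v, ENNReal.ofReal (if f v then p else 1 - p) := by
  classical
  let g : V → Bool := fun v ↦ if hv : v ∈ S then f ⟨v, hv⟩ else true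
  have hpre : S.restrict (π := fun _ ↦ Bool) ⁻¹' {f} = {ω | ∀ v ∈ S, ω v = g v} := by
    ext ω
    simp +contextual [funext_iff, g]
  rw [Measure.map_apply (Finset.measurable_restrict S) (measurableSet_singleton f), hpre, h.2,
    ← Finset.prod_coe_sort]
  simp [g]

protected lemma unique (hμ : IsBernoulliFam p μ) (hν : IsBernoulliFam p ν) : μ = ν := by
  have := hμ.1
  refine IsProjectiveLimit.unique (P := fun S ↦ μ.map S.restrict) (fun _ ↦ rfl) fun S ↦ ?_
  refine Measure.ext_of_singleton fun f ↦ ?_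
  rw [hμ.map_restrict_singleton, hν.map_restrict_singleton]

lemma iIndepFun (h : IsBernoulliFam p μ) :
    ProbabilityTheory.iIndepFun (fun v (ω : V → Bool) ↦ ω v) μ := by
  have := h.1
  have (v : V) : IsProbabilityMeasure (μ.map fun ω ↦ ω v) :=
    Measure.isProbabilityMeasure_map (measurable_pi_apply v).aemeasurable
  have hprod : IsBernoulliFam p (Measure.infinitePi fun v ↦ μ.map fun ω ↦ ω v) := by
    refine ⟨inferInstance, fun S f ↦ ?_⟩
    rw [show {ω : V → Bool | ∀ v ∈ S, ω v = f v} = Set.pi S fun v ↦ {f v} by ext; simp [Set.pi],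
      Measure.infinitePi_pi _ fun v _ ↦ measurableSet_singleton (f v)]
    refine Finset.prod_congr rfl fun v _ ↦ ?_
    rw [Measure.map_apply (measurable_pi_apply v) (measurableSet_singleton _)]
    exact h.measure_setOf_eq v (f v)
  rw [ProbabilityTheory.iIndepFun_iff_map_fun_eq_infinitePi_map measurable_pi_apply]
  exact Measure.map_id.trans (h.unique hprod)

lemma map_comp_of_injective {W : Type} {f : W → V} (h : IsBernoulliFam p μ)
    (hf : Function.Injective f) : IsBernoulliFam p (μ.map fun ω w ↦ ω (f w)) := by
  classical
  have := h.1
  have hmeas : Measurable fun (ω : V → Bool) w ↦ ω (f w) := by fun_prop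
  refine ⟨Measure.isProbabilityMeasure_map hmeas.aemeasurable, fun S g ↦ ?_⟩
  have hcyl : MeasurableSet {ω : W → Bool | ∀ w ∈ S, ω w = g w} :=
    measurableSet_of_dependsOn (S := S) fun ω ω' hω ↦ by simp +contextual [hω]
  have hpre : (fun (ω : V → Bool) w ↦ ω (f w)) ⁻¹' {ω | ∀ w ∈ S, ω w = g w} =
      {ω | ∀ v ∈ S.image f, ω v = Function.extend f g (fun _ ↦ true) v} := by
    ext ω
    simp [hf.extend_apply]
  rw [Measure.map_apply hmeas hcyl, hpre, h.2, Finset.prod_image hf.injOn]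
  simp only [hf.extend_apply]

lemma measureReal_inter (h : IsBernoulliFam p μ) (hS : Disjoint S S')
    (hA : DependsOn (· ∈ A) (S : Set V)) (hB : DependsOn (· ∈ B) (S' : Set V)) :
    μ.real (A ∩ B) = μ.real A * μ.real B := by
  have hind := (h.iIndepFun.indepFun_finset S S' hS measurable_pi_apply
    ).measure_inter_preimage_eq_mul (S.restrict '' A) (S'.restrict '' B)
      (Set.toFinite _).measurableSet (Set.toFinite _).measurableSet
  simp_rw [measureReal_def, ← ENNReal.toReal_mul]
  rw [← restrict_preimage_image_restrict hA, ← restrict_preimage_image_restrict hB]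
  exact congrArg ENNReal.toReal hind

lemma measureReal_ite (h : IsBernoulliFam p μ) (hS : Disjoint S S')
    (hA : DependsOn (· ∈ A) (S : Set V)) (hB : DependsOn (· ∈ B) (S : Set V))
    (hE : DependsOn (· ∈ E) (S' : Set V)) :
    μ.real (E.ite A B) = μ.real E * μ.real A + (1 - μ.real E) * μ.real B := by
  have := h.1
  have hEc : DependsOn (· ∈ Eᶜ) (S' : Set V) := fun _ _ hω ↦ congrArg Not (hE hω)
  have hE_meas := measurableSet_of_dependsOn hE
  rw [← measureReal_inter_add_sdiff hE_meas, Set.ite_inter_self, Set.ite_sdiff_self, sdiff_eq,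
    h.measureReal_inter hS hA hE, h.measureReal_inter hS hB hEc, probReal_compl_eq_one_sub hE_meas]
  ring

end IsBernoulliFam

end Bernoulli

section Exploration

variable {V : Type*} {R : V → V → Prop} {T U : Set V} {ξ : ℕ → Bool} {v : V} {i : ℕ}

/-- The event that an open walk inside `U` leads to `T` from one of the candidate vertices `C`. -/
def openWalkEvent (R : V → V → Prop) (T U C : Set V) : Set (V → Bool) :=
  {ω | ∃ v ∈ C, HasOpenWalkTo R T ω U v}

/-- The event that for some candidate `(v, i)` in `C`, a word path inside `U` that starts at `v` and
reads `ξ` from its `i`-th letter on leads to `T`. -/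
def wordPathEvent (R : V → V → Prop) (T : Set V) (ξ : ℕ → Bool) (U : Set V) (C : Set (V × ℕ)) :
    Set (V → Bool) :=
  {ω | ∃ c ∈ C, HasWordPathTo R T ω ξ U c.1 c.2}

lemma dependsOn_openWalkEvent (R : V → V → Prop) (T U C : Set V) :
    DependsOn (· ∈ openWalkEvent R T U C) U := fun _ _ hω ↦
  propext <| exists_congr fun _ ↦ and_congr_right fun _ ↦
    ⟨(·.congr hω), (·.congr fun u hu ↦ (hω u hu).symm)⟩

lemma dependsOn_wordPathEvent (R : V → V → Prop) (T : Set V) (ξ : ℕ → Bool) (U : Set V)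
    (C : Set (V × ℕ)) : DependsOn (· ∈ wordPathEvent R T ξ U C) U := fun _ _ hω ↦
  propext <| exists_congr fun _ ↦ and_congr_right fun _ ↦
    ⟨(·.congr hω), (·.congr fun u hu ↦ (hω u hu).symm)⟩

lemma wordPathEvent_mono {C C' : Set (V × ℕ)} (hC : C ⊆ C') :
    wordPathEvent R T ξ U C ⊆ wordPathEvent R T ξ U C' :=
  fun _ ⟨c, hc, h⟩ ↦ ⟨c, hC hc, h⟩

lemma openWalkEvent_subset_ite (R : V → V → Prop) (T U C : Set V) (v : V) :
    openWalkEvent R T U C ⊆ Set.ite {ω | ω v = true}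
      (openWalkEvent R T (U \ {v}) (C ∪ {w | R v w})) (openWalkEvent R T (U \ {v}) C) := by
  rintro ω ⟨u, hu, hwalk⟩
  by_cases hv : ω v = true
  · refine .inl ⟨?_, hv⟩
    rcases hwalk.avoid_or v with h | ⟨-, w, hw, h⟩
    · exact ⟨u, .inl hu, h⟩
    · exact ⟨w, .inr hw, h⟩
  · exact .inr ⟨⟨u, hu, (hwalk.avoid_or v).resolve_right fun h ↦ hv h.1⟩, hv⟩

lemma ite_subset_wordPathEvent {C : Set (V × ℕ)} (hv : v ∈ U) (hC : (v, i) ∈ C) :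
    Set.ite {ω | ω v = ξ i} (wordPathEvent R T ξ (U \ {v}) (C ∪ {w | R v w} ×ˢ {i + 1}))
      (wordPathEvent R T ξ (U \ {v}) C) ⊆ wordPathEvent R T ξ U C := by
  rintro ω (⟨⟨⟨w, j⟩, hw | ⟨hvw, rfl⟩, hpath⟩, hω⟩ | ⟨⟨c, hc, hpath⟩, -⟩)
  · exact ⟨_, hw, hpath.mono sdiff_subset⟩
  · exact ⟨_, hC, .step hv hω hvw hpath⟩
  · exact ⟨c, hc, hpath.mono sdiff_subset⟩

end Exploration

section Domination

variable {V : Type} {R : V → V → Prop} {T U : Set V} {ξ : ℕ → Bool} {v : V} {i : ℕ} {p q : ℝ}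
  {μ ν : Measure (V → Bool)}

lemma measureReal_openWalkEvent_le_of_explore (hμ : IsBernoulliFam q μ) (U : Finset V) (C : Set V)
    (v : V) :
    μ.real (openWalkEvent R T U C) ≤
      q * μ.real (openWalkEvent R T (U \ {v}) (C ∪ {w | R v w})) +
        (1 - q) * μ.real (openWalkEvent R T (U \ {v}) C) := by
  classical
  have := hμ.1
  refine (measureReal_mono (openWalkEvent_subset_ite R T U C v)).trans_eq ?_
  rw [← Finset.coe_erase, hμ.measureReal_ite (by simp) (dependsOn_openWalkEvent ..)
    (dependsOn_openWalkEvent ..) (dependsOn_setOf_eval_eq v true), hμ.measureReal_setOf_eq,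
    if_pos rfl]

lemma le_measureReal_wordPathEvent_of_explore (hν : IsBernoulliFam p ν) {U : Finset V}
    {C : Set (V × ℕ)} (hv : v ∈ U) (hC : (v, i) ∈ C) :
    ν.real {ω | ω v = ξ i} *
        ν.real (wordPathEvent R T ξ (U \ {v}) (C ∪ {w | R v w} ×ˢ {i + 1})) +
      (1 - ν.real {ω | ω v = ξ i}) * ν.real (wordPathEvent R T ξ (U \ {v}) C) ≤
      ν.real (wordPathEvent R T ξ U C) := by
  classical
  have := hν.1
  refine Eq.trans_le ?_ (measureReal_mono (ite_subset_wordPathEvent hv hC))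
  rw [← Finset.coe_erase, hν.measureReal_ite (by simp) (dependsOn_wordPathEvent ..)
    (dependsOn_wordPathEvent ..) (dependsOn_setOf_eval_eq v (ξ i))]

lemma measureReal_openWalkEvent_le_of_forall_sdiff (hμ : IsBernoulliFam q μ)
    (hν : IsBernoulliFam p ν) (hqp : q ≤ p) (hqp' : q ≤ 1 - p) {U : Finset V} {C : Set (V × ℕ)}
    (hv : v ∈ U) (hC : (v, i) ∈ C)
    (ih : ∀ C : Set (V × ℕ), μ.real (openWalkEvent R T (U \ {v}) (Prod.fst '' C)) ≤
      ν.real (wordPathEvent R T ξ (U \ {v}) C)) :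
    μ.real (openWalkEvent R T U (Prod.fst '' C)) ≤ ν.real (wordPathEvent R T ξ U C) := by
  have := hν.1
  have : Nonempty V := ⟨v⟩
  obtain ⟨hq0, hq1⟩ := hμ.mem_Icc
  rw [← sub_nonneg] at hq1
  set C' : Set (V × ℕ) := C ∪ {w | R v w} ×ˢ {i + 1}
  have hfst : Prod.fst '' C' = Prod.fst '' C ∪ {w | R v w} := by
    rw [image_union, fst_image_prod _ (singleton_nonempty _)]
  have hstate : q ≤ ν.real {ω | ω v = ξ i} := by
    rw [hν.measureReal_setOf_eq]
    split_ifs <;> assumption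
  have hmono : ν.real (wordPathEvent R T ξ (U \ {v}) C) ≤
      ν.real (wordPathEvent R T ξ (U \ {v}) C') :=
    measureReal_mono (wordPathEvent_mono subset_union_left)
  calc μ.real (openWalkEvent R T U (Prod.fst '' C))
    _ ≤ q * μ.real (openWalkEvent R T (U \ {v}) (Prod.fst '' C')) +
        (1 - q) * μ.real (openWalkEvent R T (U \ {v}) (Prod.fst '' C)) :=
      hfst ▸ measureReal_openWalkEvent_le_of_explore hμ U _ v
    _ ≤ q * ν.real (wordPathEvent R T ξ (U \ {v}) C') +
        (1 - q) * ν.real (wordPathEvent R T ξ (U \ {v}) C) := by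
      gcongr
      exacts [ih C', ih C]
    _ ≤ ν.real {ω | ω v = ξ i} * ν.real (wordPathEvent R T ξ (U \ {v}) C') +
        (1 - ν.real {ω | ω v = ξ i}) * ν.real (wordPathEvent R T ξ (U \ {v}) C) := by
      linarith [mul_le_mul_of_nonneg_right hstate (sub_nonneg.2 hmono)]
    _ ≤ ν.real (wordPathEvent R T ξ U C) := le_measureReal_wordPathEvent_of_explore hν hv hC

theorem measureReal_openWalkEvent_le_wordPathEvent (hμ : IsBernoulliFam q μ)
    (hν : IsBernoulliFam p ν) (hqp : q ≤ p) (hqp' : q ≤ 1 - p) (R : V → V → Prop) (T : Set V)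
    (ξ : ℕ → Bool) (U : Finset V) (C : Set (V × ℕ)) :
    μ.real (openWalkEvent R T U (Prod.fst '' C)) ≤ ν.real (wordPathEvent R T ξ U C) := by
  classical
  have := hμ.1
  have := hν.1
  induction U using Finset.strongInduction generalizing C with
  | H U ih =>
  by_cases hCT : ∃ c ∈ C, c.1 ∈ T
  · obtain ⟨c, hc, hT⟩ := hCT
    have huniv : wordPathEvent R T ξ U C = univ := eq_univ_of_forall fun _ ↦ ⟨c, hc, .done hT⟩
    rw [huniv, probReal_univ]
    exact measureReal_le_one
  by_cases hCU : ∃ c ∈ C, c.1 ∈ U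
  · obtain ⟨⟨v, i⟩, hvC, hvU⟩ := hCU
    refine measureReal_openWalkEvent_le_of_forall_sdiff hμ hν hqp hqp' hvU hvC fun C ↦ ?_
    simpa only [Finset.coe_erase] using ih _ (Finset.erase_ssubset hvU) C
  · push Not at hCT hCU
    have hempty : openWalkEvent R T U (Prod.fst '' C) = ∅ := by
      rw [eq_empty_iff_forall_notMem]
      rintro ω ⟨_, ⟨c, hc, rfl⟩, hT | ⟨hU, -⟩⟩
      exacts [hCT c hc ‹_›, hCU c hc hU]
    rw [hempty, measureReal_empty]
    exact measureReal_nonneg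

theorem measureReal_forall_hasOpenWalkTo_le (hμ : IsBernoulliFam q μ) (hν : IsBernoulliFam p ν)
    (hqp : q ≤ p) (hqp' : q ≤ 1 - p) (hR : ∀ v, {w | R v w}.Finite) (ξ : ℕ → Bool) (v : V) :
    μ.real {ω | ∀ B : Finset V, HasOpenWalkTo R (B : Set V)ᶜ ω B v} ≤
      ν.real {ω | ∀ n, HasWordPathOfLength R ω ξ n univ v 0} := by
  have := hμ.1
  have := hν.1
  have hbound (n : ℕ) : μ.real {ω | ∀ B : Finset V, HasOpenWalkTo R (B : Set V)ᶜ ω B v} ≤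
      ν.real {ω | HasWordPathOfLength R ω ξ n univ v 0} := by
    have hB : ((finite_reachBall hR n v).toFinset : Set V) = reachBall R n v :=
      Finite.coe_toFinset _
    set B : Finset V := (finite_reachBall hR n v).toFinset
    calc μ.real {ω | ∀ B : Finset V, HasOpenWalkTo R (B : Set V)ᶜ ω B v}
      _ ≤ μ.real (openWalkEvent R (B : Set V)ᶜ B (Prod.fst '' {(v, 0)})) :=
        measureReal_mono fun ω hω ↦ ⟨v, by simp, hω B⟩
      _ ≤ ν.real (wordPathEvent R (B : Set V)ᶜ ξ B {(v, 0)}) :=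
        measureReal_openWalkEvent_le_wordPathEvent hμ hν hqp hqp' ..
      _ ≤ ν.real {ω | HasWordPathOfLength R ω ξ n univ v 0} := by
        refine measureReal_mono ?_
        rintro ω ⟨_, rfl, hω⟩
        exact (hω.mono (subset_univ _)).hasWordPathOfLength (hB ▸ disjoint_compl_right)
  have hlim : Filter.Tendsto (fun n ↦ ν {ω | HasWordPathOfLength R ω ξ n univ v 0}) Filter.atTop
      (nhds (ν (⋂ n, {ω | HasWordPathOfLength R ω ξ n univ v 0}))) :=
    tendsto_measure_iInter_atTop
      (fun n ↦ (measurableSet_hasWordPathOfLength hR ξ n univ v 0).nullMeasurableSet)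
      (fun m n hmn ω ↦ antitone_hasWordPathOfLength hmn) ⟨0, measure_ne_top ν _⟩
  rw [show {ω | ∀ n, HasWordPathOfLength R ω ξ n univ v 0} = ⋂ n, _ from ofPred_forall _]
  exact ge_of_tendsto' ((ENNReal.tendsto_toReal (measure_ne_top ν _)).comp hlim) hbound

end Domination

section ZeroOneLaw

open scoped symmDiff

lemma exists_dependsOn_measureReal_symmDiff_lt {ι : Type*} {α : ι → Type*}
    [∀ i, MeasurableSpace (α i)] {μ : Measure (∀ i, α i)} [IsFiniteMeasure μ] {A : Set (∀ i, α i)}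
    (hA : MeasurableSet A) {ε : ℝ} (hε : 0 < ε) :
    ∃ (S : Finset ι) (B : Set (∀ i, α i)), DependsOn (· ∈ B) (S : Set ι) ∧ MeasurableSet B ∧
      μ.real (B ∆ A) < ε := by
  obtain ⟨B, hB, hBA⟩ := exists_measure_symmDiff_lt_of_generateFrom_isSetRing (μ := μ)
    (isSetRing_measurableCylinders (α := α))
    ⟨{univ}, countable_singleton _, singleton_subset_iff.2 (univ_mem_measurableCylinders _),
      by simp⟩
    generateFrom_measurableCylinders.symm hA (ENNReal.ofReal_pos.2 hε)
  obtain ⟨S, D, hD, rfl⟩ := (mem_measurableCylinders B).1 hB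
  refine ⟨S, cylinder S D, fun ω ω' hω ↦ ?_, hD.cylinder, ENNReal.toReal_lt_of_lt_ofReal hBA⟩
  simp only [mem_cylinder, S.dependsOn_restrict hω]

lemma abs_measureReal_sub_sq_le {Ω : Type*} [MeasurableSpace Ω] {μ : Measure Ω}
    [IsProbabilityMeasure μ] {A B : Set Ω} {τ : Ω → Ω} (hτ : MeasurePreserving τ μ μ)
    (hA : MeasurableSet A) (hinv : τ ⁻¹' A = A) (hB : MeasurableSet B)
    (hind : μ.real (B ∩ τ ⁻¹' B) = μ.real B * μ.real (τ ⁻¹' B)) :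
    |μ.real A - μ.real A ^ 2| ≤ 4 * μ.real (B ∆ A) := by
  have hpre : μ.real ((τ ⁻¹' B) ∆ A) = μ.real (B ∆ A) := by
    rw [← hτ.measureReal_preimage (hB.symmDiff hA).nullMeasurableSet, preimage_symmDiff, hinv]
  have hsymm : μ.real ((B ∩ τ ⁻¹' B) ∆ A) ≤ 2 * μ.real (B ∆ A) :=
    calc μ.real ((B ∩ τ ⁻¹' B) ∆ A)
      _ ≤ μ.real (B ∆ A ∪ (τ ⁻¹' B) ∆ A) := measureReal_mono fun ω ↦ by
        simp only [mem_symmDiff, mem_inter_iff, mem_union]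
        tauto
      _ ≤ μ.real (B ∆ A) + μ.real ((τ ⁻¹' B) ∆ A) := measureReal_union_le _ _
      _ = 2 * μ.real (B ∆ A) := by rw [hpre, two_mul]
  have hBA := abs_measureReal_sub_le_measureReal_symmDiff (μ := μ) hB.nullMeasurableSet
    hA.nullMeasurableSet
  have hBBA := abs_measureReal_sub_le_measureReal_symmDiff (μ := μ)
    (hB.inter (hτ.measurable hB)).nullMeasurableSet hA.nullMeasurableSet
  rw [hind, hτ.measureReal_preimage hB.nullMeasurableSet] at hBBA
  have hsq : |μ.real B ^ 2 - μ.real A ^ 2| ≤ 2 * |μ.real B - μ.real A| := by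
    rw [sq_sub_sq, abs_mul, abs_of_nonneg (by positivity)]
    gcongr
    linarith [measureReal_le_one (μ := μ) (s := A), measureReal_le_one (μ := μ) (s := B)]
  calc |μ.real A - μ.real A ^ 2|
    _ ≤ |μ.real A - μ.real B * μ.real B| + |μ.real B ^ 2 - μ.real A ^ 2| := by
      rw [← pow_two]
      exact abs_sub_le _ _ _
    _ ≤ 2 * μ.real (B ∆ A) + 2 * μ.real (B ∆ A) := by
      rw [abs_sub_comm]
      exact add_le_add (hBBA.trans hsymm) (hsq.trans (by gcongr))
    _ = 4 * μ.real (B ∆ A) := by ring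

variable {V : Type} [AddGroup V] {p : ℝ} {μ : Measure (V → Bool)} {A : Set (V → Bool)}

/-- The translate of a configuration that moves the state of `v + a` to `v`. -/
def shift (a : V) (ω : V → Bool) : V → Bool := fun v ↦ ω (v + a)

lemma IsBernoulliFam.measurePreserving_shift (h : IsBernoulliFam p μ) (a : V) :
    MeasurePreserving (shift a) μ μ :=
  ⟨measurable_pi_lambda _ fun v ↦ measurable_pi_apply (v + a),
    (h.map_comp_of_injective (add_left_injective a)).unique h⟩

lemma dependsOn_preimage_shift {S : Finset V} (hA : DependsOn (· ∈ A) (S : Set V)) (a : V) :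
    DependsOn (· ∈ shift a ⁻¹' A) (S.map (addRightEmbedding a) : Set V) :=
  fun _ _ hω ↦ hA fun v hv ↦ hω (v + a) (by simpa using hv)

lemma exists_disjoint_map_addRight [Infinite V] (S : Finset V) :
    ∃ a, Disjoint S (S.map (addRightEmbedding a)) := by
  classical
  obtain ⟨a, ha⟩ := Infinite.exists_notMem_finset ((S ×ˢ S).image fun x ↦ -x.1 + x.2)
  refine ⟨a, Finset.disjoint_right.2 fun v hv hvS ↦ ha ?_⟩
  obtain ⟨w, hw, rfl⟩ := Finset.mem_map.1 hv
  exact Finset.mem_image.2 ⟨(w, w + a), Finset.mk_mem_product hw hvS, neg_add_cancel_left w a⟩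

theorem IsBernoulliFam.measureReal_eq_zero_or_one [Infinite V] (h : IsBernoulliFam p μ)
    (hA : MeasurableSet A) (hinv : ∀ a, shift a ⁻¹' A = A) : μ.real A = 0 ∨ μ.real A = 1 := by
  have := h.1
  have hclose (ε : ℝ) (hε : 0 < ε) : |μ.real A - μ.real A ^ 2| ≤ ε := by
    obtain ⟨S, B, hB, hB_meas, hBA⟩ :=
      exists_dependsOn_measureReal_symmDiff_lt (μ := μ) hA (show 0 < ε / 4 by positivity)
    obtain ⟨a, ha⟩ := exists_disjoint_map_addRight S
    have := abs_measureReal_sub_sq_le (h.measurePreserving_shift a) hA (hinv a)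
      hB_meas (h.measureReal_inter ha hB (dependsOn_preimage_shift hB a))
    linarith
  have hidem : IsIdempotentElem (μ.real A) := by
    rw [IsIdempotentElem, ← pow_two]
    exact (eq_of_forall_dist_le hclose).symm
  exact IsIdempotentElem.iff_eq_zero_or_one.1 hidem

end ZeroOneLaw

section Lattice

variable {d : ℕ} {ω : Config d} {ξ : ℕ → Bool} {p : ℝ} {μ : Measure (Config d)}

lemma finite_setOf_adj (v : Vtx d) : {w | adj v w}.Finite := by
  refine (finite_Icc (v - 1) (v + 1)).subset fun w (hw : ∑ i, (v i - w i) ^ 2 = 1) ↦ ?_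
  have hle (i : Fin d) : |v i - w i| ≤ 1 := by
    rw [← sq_le_one_iff_abs_le_one, ← hw]
    exact Finset.single_le_sum (f := fun i ↦ (v i - w i) ^ 2) (fun i _ ↦ sq_nonneg _)
      (Finset.mem_univ i)
  constructor <;> intro i <;> simp <;> linarith [abs_le.1 (hle i)]

lemma PercolatesAt.hasOpenWalkTo {v : Vtx d} (h : PercolatesAt ω v) (B : Finset (Vtx d)) :
    HasOpenWalkTo adj (B : Set (Vtx d))ᶜ ω B v := by
  obtain ⟨C, hv, hinf, hopen, hconn⟩ := h
  obtain ⟨u, hu, huB⟩ := hinf.exists_notMem_finset B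
  obtain ⟨n, γ, rfl, rfl, hadj, hC⟩ := hconn v hv u hu
  have hwalk (k : ℕ) (hk : k ≤ n) : HasOpenWalkTo adj (B : Set (Vtx d))ᶜ ω B (γ k) := by
    induction hk using Nat.decreasingInduction with
    | self => exact .done huB
    | of_succ k hk ih =>
      by_cases hB : γ k ∈ B
      · exact .step hB (hopen _ (hC k hk.le)) (hadj k hk) ih
      · exact .done hB
  exact hwalk 0 n.zero_le

lemma seesWord_iff_forall_hasWordPathOfLength {v : Vtx d} :
    seesWord ω ξ v ↔ ∀ n, HasWordPathOfLength adj ω ξ n univ v 0 :=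
  exists_path_iff_forall_hasWordPathOfLength finite_setOf_adj

lemma measurableSet_exists_seesWord (ξ : ℕ → Bool) :
    MeasurableSet {ω : Config d | ∃ v, seesWord ω ξ v} := by
  simp only [seesWord_iff_forall_hasWordPathOfLength, ofPred_exists, ofPred_forall]
  exact .iUnion fun v ↦ .iInter fun n ↦
    measurableSet_hasWordPathOfLength finite_setOf_adj ξ n univ v 0

lemma seesWord_of_seesWord_shift {a v : Vtx d} (h : seesWord (shift a ω) ξ v) :
    seesWord ω ξ (v + a) := by
  obtain ⟨γ, rfl, hinj, hadj, -, hω⟩ := h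
  exact ⟨fun k ↦ γ k + a, rfl, (add_left_injective a).comp hinj,
    fun k ↦ by simpa [adj] using hadj k, fun _ ↦ trivial, hω⟩

lemma shift_preimage_exists_seesWord (ξ : ℕ → Bool) (a : Vtx d) :
    shift a ⁻¹' {ω : Config d | ∃ v, seesWord ω ξ v} = {ω | ∃ v, seesWord ω ξ v} := by
  ext ω
  refine ⟨fun ⟨v, hv⟩ ↦ ⟨v + a, seesWord_of_seesWord_shift hv⟩, fun ⟨v, hv⟩ ↦
    ⟨v + -a, seesWord_of_seesWord_shift (a := -a) ?_⟩⟩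
  have : shift (-a) (shift a ω) = ω := funext fun v ↦ by simp [shift]
  rwa [this]

lemma adj_single_single {i : Fin d} {k l : ℤ} (h : |k - l| = 1) :
    adj (Pi.single i k) (Pi.single i l) := by
  simp_rw [adj, ← Pi.sub_apply, ← Pi.single_sub]
  rw [Finset.sum_eq_single i (fun j _ hj ↦ by simp [hj]) (by simp), Pi.single_eq_same, ← sq_abs, h,
    one_pow]

lemma percolatesAt_zero_of_forall_eq_true (hd : 0 < d) (hω : ∀ v, ω v = true) :
    PercolatesAt ω 0 := by
  let i : Fin d := ⟨0, hd⟩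
  refine ⟨range (Pi.single i), ⟨0, Pi.single_zero i⟩,
    infinite_range_of_injective (Pi.single_injective i), fun u _ ↦ hω u, ?_⟩
  rintro _ ⟨k, rfl⟩ _ ⟨l, rfl⟩
  refine ⟨(l - k).natAbs, fun m ↦ Pi.single i (k + m * (l - k).sign), by simp, ?_, fun m hm ↦ ?_,
    fun m _ ↦ mem_range_self _⟩
  · simp only [mul_comm _ (l - k).sign, Int.sign_mul_natAbs, add_sub_cancel]
  · have hne : l - k ≠ 0 := by lia
    refine adj_single_single ?_
    rw [show k + m * (l - k).sign - (k + (m + 1 : ℕ) * (l - k).sign) = -(l - k).sign by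
      push_cast; ring, abs_neg, Int.abs_sign_of_ne_zero hne]

lemma IsBernoulliFam.ae_forall_eq_true {V : Type} [Countable V] {μ : Measure (V → Bool)}
    (h : IsBernoulliFam 1 μ) : ∀ᵐ ω ∂μ, ∀ v, ω v = true :=
  ae_all_iff.2 fun v ↦ by simpa [ae_iff] using h.measure_setOf_eq v false

lemma exists_lt_measure_percolatesAt_pos {ℙ : ℝ → Measure (Config d)} (hd : 0 < d)
    (hP : IsBernoulliFam 1 (ℙ 1)) {r : ℝ} (hr : pcSite d ℙ < r) :
    ∃ q ∈ Icc 0 1, q < r ∧ 0 < ℙ q {ω | PercolatesAt ω 0} := by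
  have := hP.1
  have hae : ∀ᵐ ω ∂ℙ 1, PercolatesAt ω 0 :=
    hP.ae_forall_eq_true.mono fun ω hω ↦ percolatesAt_zero_of_forall_eq_true hd hω
  have hone : 0 < ℙ 1 {ω | PercolatesAt ω 0} :=
    pos_iff_ne_zero.2 (frequently_ae_iff.1 hae.frequently)
  have hne : {q : ℝ | q ∈ Icc 0 1 ∧ 0 < ℙ q {ω | PercolatesAt ω 0}}.Nonempty :=
    ⟨1, right_mem_Icc.2 zero_le_one, hone⟩
  obtain ⟨q, ⟨hq, hpos⟩, hqr⟩ := exists_lt_of_csInf_lt hne hr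
  exact ⟨q, hq, hqr, hpos⟩

end Lattice

theorem every_fixed_word_seen_general {d : ℕ} {p q : ℝ} {μ ν : Measure (Config d)}
    (hμ : IsBernoulliFam q μ) (hν : IsBernoulliFam p ν) (hqp : q ≤ p) (hqp' : q ≤ 1 - p)
    (hperc : 0 < μ {ω | PercolatesAt ω 0}) (ξ : ℕ → Bool) :
    ν {ω | ∃ v, seesWord ω ξ v} = 1 := by
  have := hμ.1
  have := hν.1
  have : Infinite (Vtx d) := by
    obtain ⟨ω, C, -, hC, -⟩ := nonempty_of_measure_ne_zero hperc.ne'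
    exact infinite_univ_iff.1 (hC.mono (subset_univ C))
  have hpos : 0 < ν.real {ω | ∃ v, seesWord ω ξ v} :=
    calc 0 < μ.real {ω | PercolatesAt ω 0} := ENNReal.toReal_pos hperc.ne' (measure_ne_top _ _)
      _ ≤ μ.real {ω | ∀ B : Finset (Vtx d), HasOpenWalkTo adj (B : Set (Vtx d))ᶜ ω B 0} :=
        measureReal_mono fun ω hω ↦ hω.hasOpenWalkTo
      _ ≤ ν.real {ω | ∀ n, HasWordPathOfLength adj ω ξ n univ 0 0} :=
        measureReal_forall_hasOpenWalkTo_le hμ hν hqp hqp' finite_setOf_adj ξ 0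
      _ ≤ ν.real {ω | ∃ v, seesWord ω ξ v} :=
        measureReal_mono fun ω hω ↦ ⟨0, seesWord_iff_forall_hasWordPathOfLength.2 hω⟩
  have hone := (hν.measureReal_eq_zero_or_one (measurableSet_exists_seesWord ξ)
    (shift_preimage_exists_seesWord ξ)).resolve_left hpos.ne'
  exact (ENNReal.toReal_eq_one_iff _).1 hone

/-- **Every fixed word is seen** : for `d ≥ 3` and
`p ∈ (p_c^site(ℤ^d), 1 − p_c^site(ℤ^d))`, every fixed word `ξ` is almost surely seen
from some vertex of `ℤ^d`. -/
theorem every_fixed_word_seen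
    (d : ℕ) (hd : 3 ≤ d)
    (ℙ : ℝ → Measure (Config d))
    (hP : ∀ q : ℝ, 0 ≤ q → q ≤ 1 → IsBernoulliFam q (ℙ q))
    (p : ℝ) (hp : pcSite d ℙ < p) (hp' : p < 1 - pcSite d ℙ)
    (ξ : ℕ → Bool) :
    ℙ p {ω | ∃ v : Vtx d, seesWord ω ξ v} = 1 := by
  obtain ⟨q, ⟨hq0, hq1⟩, hqr, hperc⟩ := exists_lt_measure_percolatesAt_pos (by lia)
    (hP 1 zero_le_one le_rfl) (lt_min hp (lt_sub_comm.1 hp'))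
  obtain ⟨hqp, hqp'⟩ := lt_min_iff.1 hqr
  exact every_fixed_word_seen_general (hP q hq0 hq1)
    (hP p (by linarith) (by linarith)) hqp.le hqp'.le hperc ξ

end PercWords
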